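/- arXiv:math/0609130 — 2 statements merged into one kernel-verified Lean document; each statement's English description precedes it below -/
import Mathlib

section
/- For n×n positive semidefinite complex matrices A and B, every index j with 1 ≤ j ≤ n, and every real s with 0 ≤ s ≤ 1, the j-th largest singular value satisfies σ_j(A^s B^{1-s} + A^{1-s} B^s) ≤ σ_j(A + B). -/
open scoped ComplexOrder Matrix

/-- `eigDesc M j` : the `j`-th largest (0-indexed) real part of the eigenvalues
(roots of the characteristic polynomial, with multiplicity) of `M`. -/
noncomputable def eigDesc {m : Type*} [Fintype m] [DecidableEq m]
    (M : Matrix m m ℂ) (j : ℕ) : ℝ :=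
  ((M.charpoly.roots.map Complex.re).sort (· ≥ ·)).getD j 0

/-- `svalDesc K j` : the `j`-th largest (0-indexed) singular value of `K`. -/
noncomputable def svalDesc {m n : Type*} [Fintype m] [Fintype n] [DecidableEq n]
    (K : Matrix m n ℂ) (j : ℕ) : ℝ :=
  Real.sqrt (eigDesc (Kᴴ * K) j)

/-- Real power of a Hermitian matrix, via the functional calculus. -/
noncomputable def Matrix.IsHermitian.rpow {n : Type*} [Fintype n] [DecidableEq n]
    {A : Matrix n n ℂ} (hA : A.IsHermitian) (r : ℝ) : Matrix n n ℂ :=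
  hA.cfc (fun x => x ^ r)

/-!
Applying Weyl monotonicity to `2 • [[0, Pᴴ Q], [Qᴴ P, 0]] ≤ (P Q)ᴴ (P Q)` gives the
arithmetic–geometric mean inequality `2 σ_j(Pᴴ Q) ≤ λ_j(P Pᴴ + Q Qᴴ)`. Say `x ≤ y`. Since
`A ^ x * B ^ y + A ^ y * B ^ x = A ^ x * S * B ^ x` with `S = A ^ (y - x) + B ^ (y - x)`, twice
its `j`-th singular value is at most `λ_j(√S (A ^ (2 * x) + B ^ (2 * x)) √S)`. For
`0 ≤ q ≤ p`, operator concavity of `t ^ (q / p)` and operator convexity of `t ^ (1 + q / p)` give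
`√T (A ^ q + B ^ q) √T ≤ 2 • (A ^ (p + q) + B ^ (p + q))` with `T = A ^ p + B ^ p`. Applied to the
exponents `y - x` and `2 * x`, whose roles can be exchanged because
`λ_j(√S T √S) = λ_j(√T S √T)`, this bounds the eigenvalue by `2 λ_j(A ^ (x + y) + B ^ (x + y))`.
-/

section PowerInequalities

open Set MeasureTheory Real
open scoped NNReal

section Ring

variable {A : Type*} [PartialOrder A] [Ring A] [StarRing A] [TopologicalSpace A]
  [StarOrderedRing A] [Algebra ℝ A] [ContinuousFunctionalCalculus ℝ A IsSelfAdjoint]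
  [NonnegSpectrumClass ℝ A]

lemma cfc_rpow_add_of_nonneg (a : A) {x y : ℝ} (hx : 0 ≤ x) (hy : 0 ≤ y) :
    a ^ (x + y) = a ^ x * a ^ y := by
  simp only [CFC.rpow_def]
  rw [← cfc_mul ..]
  exact cfc_congr fun z _ ↦ NNReal.rpow_add_of_nonneg z hx hy

variable [IsSemitopologicalRing A] [T2Space A]

lemma cfc_smul_rpow [StarModule ℝ A] {a : A} (ha : 0 ≤ a) {t r : ℝ} (ht : 0 ≤ t) (hr : 0 ≤ r) :
    (t • a) ^ r = t ^ r • a ^ r := by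
  rw [CFC.rpow_eq_cfc_real ha, CFC.rpow_eq_cfc_real (smul_nonneg ht ha), ← cfc_comp_const_mul ..,
    ← cfc_const_mul ..]
  exact cfc_congr fun z hz ↦ Real.mul_rpow ht (spectrum_nonneg_of_nonneg ha hz)

lemma conjSqrt_rpow {a : A} {r : ℝ} (hr : 0 ≤ r) :
    CFC.conjSqrt a (a ^ r) = a ^ (1 + r) := by
  rw [CFC.conjSqrt_apply, CFC.sqrt_eq_rpow, ← cfc_rpow_add_of_nonneg a (by norm_num) hr,
    ← cfc_rpow_add_of_nonneg a (by positivity) (by norm_num)]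
  ring_nf

end Ring

variable {A : Type*} [CStarAlgebra A] [PartialOrder A] [StarOrderedRing A]

lemma convexOn_sq_of_isSelfAdjoint :
    ConvexOn ℝ {a : A | IsSelfAdjoint a} (fun a ↦ a ^ 2) := by
  refine ⟨(selfAdjoint.submodule ℝ A).convex, fun x hx y hy u v hu hv huv ↦ ?_⟩
  have hsq : 0 ≤ (u * v) • (x - y) ^ 2 := smul_nonneg (mul_nonneg hu hv) (hx.sub hy).sq_nonneg
  obtain rfl : v = 1 - u := by linarith
  rw [← sub_nonneg]
  convert hsq using 1
  simp only [sq, add_mul, mul_add, sub_mul, mul_sub, smul_mul_assoc, mul_smul_comm, smul_sub]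
  module

lemma convexOn_cfc_rpowIntegrand₁₂ (p : ℝ) {t : ℝ} (ht : 0 < t) :
    ConvexOn ℝ (Ici (0 : A)) (cfc (rpowIntegrand₁₂ p t)) := by
  have hcfc : (Ici (0 : A)).EqOn (cfc (rpowIntegrand₁₂ p t)) fun x ↦
      t ^ (p - 1) • (t⁻¹ • x + t • Ring.inverse (algebraMap ℝ A t + x) - 1) := by
    intro x (hx : 0 ≤ x)
    have hspec : ∀ z ∈ spectrum ℝ x, t + z ≠ 0 := by grind
    have hlin : ContinuousOn (fun z : ℝ ↦ t⁻¹ * z) (spectrum ℝ x) := by fun_prop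
    have hinv : ContinuousOn (fun z : ℝ ↦ (t + z)⁻¹) (spectrum ℝ x) := by
      fun_prop (disch := assumption)
    unfold rpowIntegrand₁₂
    rw [cfc_const_mul _ _ x (by fun_prop), cfc_sub _ _ x (by fun_prop) (by fun_prop),
      cfc_add (a := x) _ _ hlin (by fun_prop), cfc_const_mul_id .., cfc_const_mul _ _ x hinv,
      cfc_inv _ _ hspec .., cfc_const_add .., cfc_id' .., cfc_const_one ..]
  refine ConvexOn.congr (ConvexOn.smul (by positivity) ?_) hcfc.symm
  refine ConvexOn.sub (ConvexOn.add ?_ ?_) (concaveOn_const _ (convex_Ici 0))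
  · exact (convexOn_id (convex_Ici 0)).smul (by positivity)
  · exact (CStarAlgebra.convexOn_ringInverse_algebraMap_add ht).smul ht.le

lemma convexOn_nnrpow_Ioo {p : ℝ≥0} (hp : p ∈ Ioo 1 2) :
    ConvexOn ℝ (Ici (0 : A)) (fun a ↦ a ^ p) := by
  obtain ⟨μ, hμ⟩ := CFC.exists_measure_nnrpow_eq_integral_cfcₙ_rpowIntegrand₁₂ A hp
  refine ConvexOn.congr ?_ fun a ha ↦ (hμ a ha).2.symm
  refine integral_convexOn_of_integrand_ae (convex_Ici _) ?_ fun a ha ↦ (hμ a ha).1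
  filter_upwards [ae_restrict_mem measurableSet_Ioi] with t (ht : 0 < t)
  refine (convexOn_cfc_rpowIntegrand₁₂ (p : ℝ) ht).congr fun x (hx : 0 ≤ x) ↦ ?_
  have hcont : ContinuousOn (rpowIntegrand₁₂ p t) (quasispectrum ℝ x) := by
    have hspec : ∀ z ∈ quasispectrum ℝ x, t + z ≠ 0 := by grind
    unfold rpowIntegrand₁₂
    fun_prop (disch := assumption)
  exact (cfcₙ_eq_cfc hcont (rpowIntegrand₁₂_zero ht)).symm

lemma convexOn_cfc_rpow {p : ℝ} (hp : p ∈ Icc 1 2) :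
    ConvexOn ℝ (Ici (0 : A)) (fun a ↦ a ^ p) := by
  obtain rfl | hp1 := hp.1.eq_or_lt
  · exact (convexOn_id (convex_Ici 0)).congr fun a ha ↦ (CFC.rpow_one a ha).symm
  obtain rfl | hp2 := hp.2.eq_or_lt
  · refine (convexOn_sq_of_isSelfAdjoint.subset (fun _ ↦ IsSelfAdjoint.of_nonneg)
      (convex_Ici 0)).congr fun a ha ↦ ?_
    exact_mod_cast (CFC.rpow_natCast a 2 ha).symm
  · lift p to ℝ≥0 using by positivity
    simp_rw [← CFC.nnrpow_eq_rpow (A := A) (x := p) (by exact_mod_cast zero_lt_one.trans hp1)]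
    exact convexOn_nnrpow_Ioo (by exact_mod_cast And.intro hp1 hp2)

variable {a b : A}

lemma rpow_add_rpow_le_smul_add_rpow {r : ℝ} (hr : r ∈ Icc 0 1) (ha : 0 ≤ a) (hb : 0 ≤ b) :
    a ^ r + b ^ r ≤ (2 : ℝ) ^ (1 - r) • (a + b) ^ r := by
  have hhalf : (0 : ℝ) ≤ 2⁻¹ := by norm_num
  have hmid : (2⁻¹ : ℝ) • (a ^ r + b ^ r) ≤ (2⁻¹ : ℝ) ^ r • (a + b) ^ r := by
    simpa only [← smul_add, cfc_smul_rpow (add_nonneg ha hb) hhalf hr.1] using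
      (CFC.concaveOn_rpow hr).2 ha hb hhalf hhalf (by norm_num)
  calc a ^ r + b ^ r = (2 : ℝ) • (2⁻¹ : ℝ) • (a ^ r + b ^ r) := by simp [smul_smul]
    _ ≤ (2 : ℝ) • (2⁻¹ : ℝ) ^ r • (a + b) ^ r := by gcongr
    _ = (2 : ℝ) ^ (1 - r) • (a + b) ^ r := by
      rw [smul_smul, inv_rpow zero_le_two, rpow_sub zero_lt_two, rpow_one, div_eq_mul_inv]

lemma add_rpow_le_smul_rpow_add_rpow {p : ℝ} (hp : p ∈ Icc 1 2) (ha : 0 ≤ a) (hb : 0 ≤ b) :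
    (a + b) ^ p ≤ (2 : ℝ) ^ (p - 1) • (a ^ p + b ^ p) := by
  have hhalf : (0 : ℝ) ≤ 2⁻¹ := by norm_num
  have hmid : (2⁻¹ : ℝ) ^ p • (a + b) ^ p ≤ (2⁻¹ : ℝ) • (a ^ p + b ^ p) := by
    simpa only [← smul_add, cfc_smul_rpow (add_nonneg ha hb) hhalf (zero_le_one.trans hp.1)] using
      (convexOn_cfc_rpow hp).2 ha hb hhalf hhalf (by norm_num)
  calc (a + b) ^ p = (2 : ℝ) ^ p • (2⁻¹ : ℝ) ^ p • (a + b) ^ p := by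
        rw [smul_smul, ← mul_rpow zero_le_two hhalf, mul_inv_cancel₀ two_ne_zero, one_rpow,
          one_smul]
    _ ≤ (2 : ℝ) ^ p • (2⁻¹ : ℝ) • (a ^ p + b ^ p) := by gcongr
    _ = (2 : ℝ) ^ (p - 1) • (a ^ p + b ^ p) := by
      rw [smul_smul, rpow_sub zero_lt_two, rpow_one, div_eq_mul_inv]

lemma conjSqrt_add_rpow_add_rpow_le {r : ℝ} (hr : r ∈ Icc 0 1) (ha : 0 ≤ a) (hb : 0 ≤ b) :
    CFC.conjSqrt (a + b) (a ^ r + b ^ r) ≤ (2 : ℝ) • (a ^ (1 + r) + b ^ (1 + r)) :=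
  calc CFC.conjSqrt (a + b) (a ^ r + b ^ r)
    _ ≤ CFC.conjSqrt (a + b) ((2 : ℝ) ^ (1 - r) • (a + b) ^ r) :=
      CFC.conjSqrt_le_conjSqrt (rpow_add_rpow_le_smul_add_rpow hr ha hb)
    _ = (2 : ℝ) ^ (1 - r) • (a + b) ^ (1 + r) := by
      rw [map_smul, conjSqrt_rpow hr.1]
    _ ≤ (2 : ℝ) ^ (1 - r) • (2 : ℝ) ^ (1 + r - 1) • (a ^ (1 + r) + b ^ (1 + r)) := by
      gcongr
      exact add_rpow_le_smul_rpow_add_rpow ⟨by linarith [hr.1], by linarith [hr.2]⟩ ha hb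
    _ = (2 : ℝ) • (a ^ (1 + r) + b ^ (1 + r)) := by
      rw [smul_smul, ← Real.rpow_add zero_lt_two]
      norm_num

lemma conjSqrt_rpow_add_rpow_le {p q : ℝ} (hq : 0 ≤ q) (hqp : q ≤ p) (ha : 0 ≤ a) (hb : 0 ≤ b) :
    CFC.conjSqrt (a ^ p + b ^ p) (a ^ q + b ^ q) ≤ (2 : ℝ) • (a ^ (p + q) + b ^ (p + q)) := by
  have hp : 0 ≤ p := hq.trans hqp
  have hpq : p * (q / p) = q := mul_div_cancel_of_imp' fun hp0 ↦ by linarith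
  have key := conjSqrt_add_rpow_add_rpow_le (A := A) (a := a ^ p) (b := b ^ p) (r := q / p)
    ⟨by positivity, div_le_one_of_le₀ hqp hp⟩ CFC.rpow_nonneg CFC.rpow_nonneg
  simpa only [CFC.rpow_rpow_of_exponent_nonneg, ha, hb, hp, div_nonneg hq hp, mul_add, mul_one, hpq,
    add_nonneg zero_le_one] using key

end PowerInequalities

section Eigenvalues

open Matrix
open scoped MatrixOrder

variable {ι κ : Type*} [Fintype ι] [Fintype κ]

lemma star_dotProduct_conjTranspose_mul_diagonal_mul_mulVec [DecidableEq κ]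
    (Z : Matrix κ ι ℂ) (d : κ → ℝ) (y : ι → ℂ) :
    star y ⬝ᵥ (Zᴴ * diagonal (fun i ↦ (d i : ℂ)) * Z) *ᵥ y =
      ((∑ i, d i * ‖(Z *ᵥ y) i‖ ^ 2 : ℝ) : ℂ) := by
  rw [← mulVec_mulVec, ← mulVec_mulVec, dotProduct_mulVec, ← star_mulVec]
  simp only [dotProduct, mulVec_diagonal, Complex.ofReal_sum, Complex.ofReal_mul,
    Complex.ofReal_pow, ← Complex.conj_mul', Pi.star_apply, RCLike.star_def]
  exact Finset.sum_congr rfl fun i _ ↦ by ring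

lemma le_of_smul_conjTranspose_mul_self_le_diagonal {N : ℕ} {d : Fin N → ℝ}
    (hd : Antitone d) {Z : Matrix (Fin N) ι ℂ} (hZ : Function.Injective Z.mulVec) {c : ℝ}
    (hle : c • (Zᴴ * Z) ≤ Zᴴ * diagonal (fun i ↦ (d i : ℂ)) * Z) (j : Fin N)
    (hj : j < Fintype.card ι) : c ≤ d j := by
  by_contra! hc
  have hneg (i : Fin N) (hi : j ≤ i) : d i - c < 0 := by linarith [hd hi]
  -- The first `j` coordinates of `Z *ᵥ y` impose only `j < card ι` linear conditions on `y`.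
  obtain ⟨y, hy, hy0⟩ : ∃ y, (∀ i < j, (Z *ᵥ y) i = 0) ∧ y ≠ 0 := by
    let f : (ι → ℂ) →ₗ[ℂ] (Fin j → ℂ) := .funLeft ℂ ℂ (Fin.castLE j.2.le) ∘ₗ Z.mulVecLin
    obtain ⟨y, hy, hy0⟩ := (Submodule.ne_bot_iff _).mp <|
      LinearMap.ker_ne_bot_of_finrank_lt (f := f) (by simpa using hj)
    exact ⟨y, fun i hi ↦ congrFun hy ⟨i, hi⟩, hy0⟩
  have hdiff : Zᴴ * diagonal (fun i ↦ (d i : ℂ)) * Z - c • (Zᴴ * Z) =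
      Zᴴ * diagonal (fun i ↦ ((d i - c : ℝ) : ℂ)) * Z := by
    have hdiag : diagonal (fun i ↦ ((d i - c : ℝ) : ℂ)) =
        diagonal (fun i ↦ (d i : ℂ)) - c • (1 : Matrix (Fin N) (Fin N) ℂ) := by
      ext i k
      by_cases hik : i = k <;> simp [hik]
    rw [hdiag, Matrix.mul_sub, Matrix.sub_mul, Matrix.mul_smul, Matrix.smul_mul, Matrix.mul_one]
  have hsum : 0 ≤ ∑ i, (d i - c) * ‖(Z *ᵥ y) i‖ ^ 2 := by
    have hquad := (le_iff.mp hle).dotProduct_mulVec_nonneg y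
    rw [hdiff, star_dotProduct_conjTranspose_mul_diagonal_mul_mulVec] at hquad
    exact_mod_cast hquad
  have hterm (i : Fin N) : (d i - c) * ‖(Z *ᵥ y) i‖ ^ 2 ≤ 0 := by
    obtain hi | hi := lt_or_ge i j
    · simp [hy i hi]
    · exact mul_nonpos_of_nonpos_of_nonneg (hneg i hi).le (sq_nonneg _)
  have hzero := (Finset.sum_eq_zero_iff_of_nonpos fun i _ ↦ hterm i).mp
    (hsum.antisymm' (Finset.sum_nonpos fun i _ ↦ hterm i))
  refine hy0 (hZ (funext fun i ↦ ?_))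
  obtain hi | hi := lt_or_ge i j
  · simpa using hy i hi
  · simpa [(hneg i hi).ne] using hzero i (Finset.mem_univ i)

lemma smul_conjTranspose_mul_self_le_of_mul_eq_mul_diagonal [DecidableEq ι]
    {H : Matrix κ κ ℂ} {V : Matrix κ ι ℂ} {d e : ι → ℝ} (he : ∀ i, 0 ≤ e i)
    (hV : Vᴴ * V = diagonal fun i ↦ (e i : ℂ))
    (hHV : H * V = V * diagonal fun i ↦ (d i : ℂ)) {c : ℝ} (hc : ∀ i, c ≤ d i) :
    c • (Vᴴ * V) ≤ Vᴴ * H * V := by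
  rw [Matrix.mul_assoc, hHV, ← Matrix.mul_assoc, hV, diagonal_mul_diagonal, le_iff]
  have hdiag : diagonal (fun i ↦ (e i : ℂ) * d i) - c • diagonal (fun i ↦ (e i : ℂ)) =
      diagonal fun i ↦ ((e i * (d i - c) : ℝ) : ℂ) := by
    ext i k
    by_cases hik : i = k <;> simp [hik, mul_sub, mul_comm]
  rw [hdiag]
  exact .diagonal fun i ↦ Complex.zero_le_real.mpr <| mul_nonneg (he i) (sub_nonneg.mpr (hc i))

variable {n : Type*} [Fintype n] [DecidableEq n] {H H' : Matrix n n ℂ} {j : ℕ}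

lemma eigDesc_of_card_le (H : Matrix n n ℂ) (hj : Fintype.card n ≤ j) : eigDesc H j = 0 := by
  refine List.getD_eq_default _ _ ?_
  calc _ = H.charpoly.roots.card := by simp
    _ ≤ H.charpoly.natDegree := Polynomial.card_roots' _
    _ = Fintype.card n := H.charpoly_natDegree_eq_dim
    _ ≤ j := hj

lemma lt_card_of_eigDesc_pos (hpos : 0 < eigDesc H j) : j < Fintype.card n := by
  by_contra! hj
  exact hpos.ne' (eigDesc_of_card_le H hj)

lemma eigDesc_eq_eigenvalues₀ (hH : H.IsHermitian) (hj : j < Fintype.card n) :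
    eigDesc H j = hH.eigenvalues₀ ⟨j, hj⟩ := by
  have hsort : (H.charpoly.roots.map Complex.re).sort (· ≥ ·) = List.ofFn hH.eigenvalues₀ :=
    hH.sort_roots_charpoly_eq_eigenvalues₀
  rw [eigDesc, hsort, List.getD_eq_getElem _ _ (by simpa using hj), List.getElem_ofFn]

lemma eigDesc_le_eigDesc_of_le (hH : H.IsHermitian) {i : ℕ} (hij : i ≤ j)
    (hj : j < Fintype.card n) : eigDesc H j ≤ eigDesc H i := by
  rw [eigDesc_eq_eigenvalues₀ hH hj, eigDesc_eq_eigenvalues₀ hH (hij.trans_lt hj)]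
  exact hH.eigenvalues₀_antitone hij

lemma exists_unitary_mul_eq_mul_diagonal_eigDesc (hH : H.IsHermitian) :
    ∃ W : Matrix n (Fin (Fintype.card n)) ℂ, Wᴴ * W = 1 ∧ W * Wᴴ = 1 ∧
      H * W = W * diagonal fun i : Fin (Fintype.card n) ↦ (eigDesc H i : ℂ) := by
  let e : Fin (Fintype.card n) ≃ n := Fintype.equivOfCardEq (Fintype.card_fin _)
  let U : Matrix n n ℂ := hH.eigenvectorUnitary
  have hU : Uᴴ * U = 1 := Unitary.coe_star_mul_self hH.eigenvectorUnitary
  have hHU (k : Fin (Fintype.card n)) : H *ᵥ U.col (e k) = (eigDesc H k : ℂ) • U.col (e k) := by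
    rw [eigDesc_eq_eigenvalues₀ hH k.2, hH.eigenvectorUnitary_col_eq, hH.mulVec_eigenvectorBasis]
    simp [IsHermitian.eigenvalues, e]
  have hW : (U.submatrix id e)ᴴ * U.submatrix id e = 1 := by
    rw [conjTranspose_submatrix, ← submatrix_mul Uᴴ U e id e Function.bijective_id, hU,
      submatrix_one_equiv]
  refine ⟨U.submatrix id e, hW, (mul_eq_one_comm_of_card_eq _ _ ℂ (by simp)).mp hW, ?_⟩
  ext i k
  rw [mul_diagonal]
  simpa [mul_apply, mulVec, dotProduct, mul_comm] using congrFun (hHU k) i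

lemma exists_isometry_mul_eq_mul_diagonal_eigDesc (hH : H.IsHermitian)
    (hj : j < Fintype.card n) :
    ∃ V : Matrix n (Fin (j + 1)) ℂ, Vᴴ * V = 1 ∧
      H * V = V * diagonal fun i : Fin (j + 1) ↦ (eigDesc H i : ℂ) := by
  obtain ⟨W, hW, -, hHW⟩ := exists_unitary_mul_eq_mul_diagonal_eigDesc hH
  refine ⟨W.submatrix id (Fin.castLE hj), ?_, ?_⟩
  · ext i k
    simpa [mul_apply, one_apply] using congrFun₂ hW (Fin.castLE hj i) (Fin.castLE hj k)
  · ext i k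
    have hcol := congrFun₂ hHW i (Fin.castLE hj k)
    rw [mul_diagonal] at hcol ⊢
    simpa [mul_apply] using hcol

lemma le_eigDesc_of_smul_conjTranspose_mul_self_le (hH : H.IsHermitian) {V : Matrix n ι ℂ}
    (hV : Function.Injective V.mulVec) {c : ℝ} (hle : c • (Vᴴ * V) ≤ Vᴴ * H * V)
    (hj : j < Fintype.card ι) : c ≤ eigDesc H j := by
  obtain ⟨W, -, hW, hHW⟩ := exists_unitary_mul_eq_mul_diagonal_eigDesc hH
  have hjn : j < Fintype.card n := hj.trans_le <| by
    simpa using LinearMap.finrank_le_finrank_of_injective (f := V.mulVecLin) hV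
  have hgram : (Wᴴ * V)ᴴ * (Wᴴ * V) = Vᴴ * V := by
    rw [conjTranspose_mul, conjTranspose_conjTranspose, Matrix.mul_assoc, ← Matrix.mul_assoc W, hW,
      Matrix.one_mul]
  have hquad : (Wᴴ * V)ᴴ * diagonal (fun i : Fin (Fintype.card n) ↦ (eigDesc H i : ℂ)) *
      (Wᴴ * V) = Vᴴ * H * V := by
    rw [conjTranspose_mul, conjTranspose_conjTranspose, Matrix.mul_assoc Vᴴ, ← hHW,
      Matrix.mul_assoc Vᴴ, Matrix.mul_assoc H, ← Matrix.mul_assoc W, hW, Matrix.one_mul,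
      Matrix.mul_assoc]
  refine le_of_smul_conjTranspose_mul_self_le_diagonal (Z := Wᴴ * V)
    (fun i k hik ↦ eigDesc_le_eigDesc_of_le hH hik k.2) ?_ (hquad ▸ hgram ▸ hle) ⟨j, hjn⟩ hj
  refine fun x y hxy ↦ hV ?_
  simpa [hW, ← Matrix.mul_assoc] using congrArg (W *ᵥ ·) hxy

lemma exists_injective_eigDesc_smul_le (hH : H.IsHermitian) (hj : j < Fintype.card n) :
    ∃ V : Matrix n (Fin (j + 1)) ℂ, Function.Injective V.mulVec ∧
      eigDesc H j • (Vᴴ * V) ≤ Vᴴ * H * V := by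
  obtain ⟨V, hV, hHV⟩ := exists_isometry_mul_eq_mul_diagonal_eigDesc hH hj
  refine ⟨V, fun x y hxy ↦ by simpa [hV] using congrArg (Vᴴ *ᵥ ·) hxy, ?_⟩
  exact smul_conjTranspose_mul_self_le_of_mul_eq_mul_diagonal (e := fun _ ↦ 1)
    (fun _ ↦ zero_le_one) (by simpa using hV) hHV fun i ↦
      eigDesc_le_eigDesc_of_le hH (Nat.lt_succ_iff.mp i.2) hj

lemma eigDesc_mono (hH : H.IsHermitian) (hle : H ≤ H') (hj : j < Fintype.card n) :
    eigDesc H j ≤ eigDesc H' j := by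
  have hH' : H'.IsHermitian := by simpa using hH.add (le_iff.mp hle).isHermitian
  obtain ⟨V, hV, hHV⟩ := exists_injective_eigDesc_smul_le hH hj
  refine le_eigDesc_of_smul_conjTranspose_mul_self_le hH' hV (hHV.trans ?_) (by simp)
  rw [le_iff, ← Matrix.sub_mul, ← Matrix.mul_sub]
  exact (le_iff.mp hle).conjTranspose_mul_mul_same V

lemma eigDesc_nonneg (hH : H.PosSemidef) (j : ℕ) : 0 ≤ eigDesc H j := by
  obtain hj | hj := le_or_gt (Fintype.card n) j
  · rw [eigDesc_of_card_le H hj]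
  · refine le_eigDesc_of_smul_conjTranspose_mul_self_le (V := 1) hH.1 (fun x y ↦ by simp) ?_ hj
    simpa using hH.nonneg

lemma eigDesc_smul (hH : H.IsHermitian) {r : ℝ} (hr : 0 < r) (j : ℕ) :
    eigDesc (r • H) j = r * eigDesc H j := by
  obtain hj | hj := le_or_gt (Fintype.card n) j
  · simp [eigDesc_of_card_le _ hj]
  have hle {K : Matrix n n ℂ} (hK : K.IsHermitian) {t : ℝ} (ht : 0 < t) :
      t * eigDesc K j ≤ eigDesc (t • K) j := by
    obtain ⟨V, hV, hKV⟩ := exists_injective_eigDesc_smul_le hK hj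
    refine le_eigDesc_of_smul_conjTranspose_mul_self_le (hK.smul (.all t)) hV ?_ (by simp)
    simpa [mul_smul] using smul_le_smul_of_nonneg_left hKV ht.le
  refine le_antisymm ?_ (hle hH hr)
  simpa [smul_smul, hr.ne', inv_mul_le_iff₀ hr] using hle (hH.smul (.all r)) (inv_pos.mpr hr)

lemma le_eigDesc_of_mul_eq_mul_diagonal [DecidableEq ι] (hH : H.IsHermitian) {V : Matrix n ι ℂ}
    {d e : ι → ℝ} (he : ∀ i, 0 < e i) (hV : Vᴴ * V = diagonal fun i ↦ (e i : ℂ))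
    (hHV : H * V = V * diagonal fun i ↦ (d i : ℂ)) {c : ℝ} (hc : ∀ i, c ≤ d i)
    (hj : j < Fintype.card ι) : c ≤ eigDesc H j := by
  refine le_eigDesc_of_smul_conjTranspose_mul_self_le hH (V := V) (fun x y hxy ↦ ?_) ?_ hj
  · ext i
    have hi := congrFun (congrArg (Vᴴ *ᵥ ·) hxy) i
    simpa [hV, mulVec_diagonal, (he i).ne'] using hi
  · exact smul_conjTranspose_mul_self_le_of_mul_eq_mul_diagonal (fun i ↦ (he i).le) hV hHV hc

lemma eigDesc_le_svalDesc (hH : H.IsHermitian) (j : ℕ) : eigDesc H j ≤ svalDesc H j := by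
  obtain hpos | hpos := lt_or_ge 0 (eigDesc H j)
  swap; · exact hpos.trans (Real.sqrt_nonneg _)
  have hj := lt_card_of_eigDesc_pos hpos
  obtain ⟨V, hV, hHV⟩ := exists_isometry_mul_eq_mul_diagonal_eigDesc hH hj
  refine Real.le_sqrt_of_sq_le <| le_eigDesc_of_mul_eq_mul_diagonal (V := V)
    (d := fun i ↦ eigDesc H i ^ 2) (e := fun _ ↦ 1) (isHermitian_conjTranspose_mul_self H)
    (fun _ ↦ one_pos) (by simpa using hV) ?_ (fun i ↦ ?_) (by simp)
  · rw [hH.eq, Matrix.mul_assoc, hHV, ← Matrix.mul_assoc, hHV, Matrix.mul_assoc,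
      diagonal_mul_diagonal]
    simp [sq]
  · exact pow_le_pow_left₀ hpos.le (eigDesc_le_eigDesc_of_le hH (Nat.lt_succ_iff.mp i.2) hj) 2

variable {m p q : Type*} [Fintype m] [DecidableEq m] [Fintype p] [Fintype q] [DecidableEq q]

lemma eigDesc_conjTranspose_mul_self_le (T : Matrix m n ℂ) (j : ℕ) :
    eigDesc (Tᴴ * T) j ≤ eigDesc (T * Tᴴ) j := by
  obtain hpos | hpos := lt_or_ge 0 (eigDesc (Tᴴ * T) j)
  swap; · exact hpos.trans (eigDesc_nonneg (posSemidef_self_mul_conjTranspose T) j)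
  have hT := isHermitian_conjTranspose_mul_self T
  have hj := lt_card_of_eigDesc_pos hpos
  obtain ⟨V, hV, hTV⟩ := exists_isometry_mul_eq_mul_diagonal_eigDesc hT hj
  have hanti (i : Fin (j + 1)) : eigDesc (Tᴴ * T) j ≤ eigDesc (Tᴴ * T) i :=
    eigDesc_le_eigDesc_of_le hT (Nat.lt_succ_iff.mp i.2) hj
  refine le_eigDesc_of_mul_eq_mul_diagonal (V := T * V) (isHermitian_mul_conjTranspose_self T)
    (fun i ↦ hpos.trans_le (hanti i)) ?_ ?_ hanti (by simp)
  · rw [conjTranspose_mul, Matrix.mul_assoc, ← Matrix.mul_assoc Tᴴ, hTV, ← Matrix.mul_assoc, hV,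
      Matrix.one_mul]
  · rw [Matrix.mul_assoc, ← Matrix.mul_assoc Tᴴ, hTV, Matrix.mul_assoc]

lemma eigDesc_conjTranspose_mul_self (T : Matrix m n ℂ) (j : ℕ) :
    eigDesc (Tᴴ * T) j = eigDesc (T * Tᴴ) j :=
  (eigDesc_conjTranspose_mul_self_le T j).antisymm <| by
    simpa using eigDesc_conjTranspose_mul_self_le Tᴴ j

lemma svalDesc_le_eigDesc_fromBlocks {K : Matrix m n ℂ} (hpos : 0 < svalDesc K j) :
    svalDesc K j ≤ eigDesc (fromBlocks 0 K Kᴴ 0) j := by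
  have hK := isHermitian_conjTranspose_mul_self K
  have hj := lt_card_of_eigDesc_pos (Real.sqrt_pos.mp hpos)
  obtain ⟨V, hV, hKV⟩ := exists_isometry_mul_eq_mul_diagonal_eigDesc hK hj
  have hanti (i : Fin (j + 1)) : svalDesc K j ≤ svalDesc K i :=
    Real.sqrt_le_sqrt (eigDesc_le_eigDesc_of_le hK (Nat.lt_succ_iff.mp i.2) hj)
  let D : Matrix (Fin (j + 1)) (Fin (j + 1)) ℂ := diagonal fun i ↦ (svalDesc K i : ℂ)
  have hDD : D * D = diagonal fun i : Fin (j + 1) ↦ (eigDesc (Kᴴ * K) i : ℂ) := by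
    simp only [D, diagonal_mul_diagonal, ← Complex.ofReal_mul, svalDesc,
      Real.mul_self_sqrt (eigDesc_nonneg (posSemidef_conjTranspose_mul_self K) _)]
  have hD : Dᴴ = D := by
    simp [D, diagonal_conjTranspose, Pi.star_def]
  rw [← hDD, Matrix.mul_assoc] at hKV
  -- `K V` and `V D` are the two halves of eigenvectors for the eigenvalues `svalDesc K i`.
  refine le_eigDesc_of_mul_eq_mul_diagonal (V := fromRows (K * V) (V * D))
    (d := fun i ↦ svalDesc K i) (e := fun i ↦ 2 * (svalDesc K i * svalDesc K i))
    (.fromBlocks isHermitian_zero rfl isHermitian_zero)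
    (fun i ↦ ?_) ?_ ?_ hanti (by simp)
  · have := hpos.trans_le (hanti i)
    positivity
  · have hVV : (K * V)ᴴ * (K * V) = D * D := by
      rw [conjTranspose_mul, Matrix.mul_assoc, hKV, ← Matrix.mul_assoc, hV, Matrix.one_mul]
    have hDV : (V * D)ᴴ * (V * D) = D * D := by
      rw [conjTranspose_mul, hD, Matrix.mul_assoc, ← Matrix.mul_assoc Vᴴ, hV, Matrix.one_mul]
    rw [conjTranspose_fromRows_eq_fromCols_conjTranspose, fromCols_mul_fromRows, hVV, hDV,
      diagonal_mul_diagonal, diagonal_add]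
    simp only [two_mul, Complex.ofReal_add, Complex.ofReal_mul]
  · rw [fromBlocks_mul_fromRows, fromRows_mul]
    simp only [Matrix.zero_mul, zero_add, add_zero, Matrix.mul_assoc]
    change _ = fromRows (K * (V * D)) (V * (D * D))
    rw [hKV]

lemma two_mul_svalDesc_conjTranspose_mul_le (P : Matrix m p ℂ) (Q : Matrix m q ℂ) (j : ℕ) :
    2 * svalDesc (Pᴴ * Q) j ≤ eigDesc (P * Pᴴ + Q * Qᴴ) j := by
  classical
  let J : Matrix (p ⊕ q) (p ⊕ q) ℂ := fromBlocks 0 (Pᴴ * Q) (Pᴴ * Q)ᴴ 0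
  let T : Matrix m (p ⊕ q) ℂ := fromCols P Q
  obtain hpos | hpos := lt_or_ge 0 (svalDesc (Pᴴ * Q) j)
  swap
  · have hnonneg : 0 ≤ eigDesc (P * Pᴴ + Q * Qᴴ) j :=
      eigDesc_nonneg ((posSemidef_self_mul_conjTranspose P).add
        (posSemidef_self_mul_conjTranspose Q)) j
    linarith
  have hJ : J.IsHermitian := .fromBlocks isHermitian_zero rfl isHermitian_zero
  have hJT : (2 : ℝ) • J ≤ Tᴴ * T := by
    have hsub : Tᴴ * T - (2 : ℝ) • J = (fromCols P (-Q))ᴴ * fromCols P (-Q) := by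
      simp only [T, J, conjTranspose_fromCols_eq_fromRows_conjTranspose, fromRows_mul_fromCols,
        sub_eq_add_neg, fromBlocks_neg, fromBlocks_add, conjTranspose_mul,
        conjTranspose_conjTranspose, conjTranspose_neg, Matrix.mul_neg, Matrix.neg_mul, neg_neg,
        neg_zero, add_zero, two_smul]
      congr 1 <;> abel
    rw [le_iff, hsub]
    exact posSemidef_conjTranspose_mul_self _
  have hj : j < Fintype.card (p ⊕ q) := by
    have := lt_card_of_eigDesc_pos (Real.sqrt_pos.mp hpos)
    simpa using by omega
  calc 2 * svalDesc (Pᴴ * Q) j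
    _ ≤ 2 * eigDesc J j := by gcongr; exact svalDesc_le_eigDesc_fromBlocks hpos
    _ = eigDesc ((2 : ℝ) • J) j := (eigDesc_smul hJ two_pos j).symm
    _ ≤ eigDesc (Tᴴ * T) j := eigDesc_mono (hJ.smul (.all 2)) hJT hj
    _ = eigDesc (T * Tᴴ) j := eigDesc_conjTranspose_mul_self T j
    _ = eigDesc (P * Pᴴ + Q * Qᴴ) j := by
      rw [conjTranspose_fromCols_eq_fromRows_conjTranspose, fromCols_mul_fromRows]

end Eigenvalues

section Heinz

open Matrix
open scoped MatrixOrder Matrix.Norms.L2Operator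

variable {n : Type*} [Fintype n] [DecidableEq n] {A B S D : Matrix n n ℂ} {j : ℕ}

lemma eigDesc_conjSqrt_comm (hS : 0 ≤ S) (hD : 0 ≤ D) (j : ℕ) :
    eigDesc (CFC.conjSqrt S D) j = eigDesc (CFC.conjSqrt D S) j := by
  have h := eigDesc_conjTranspose_mul_self (CFC.sqrt D * CFC.sqrt S) j
  have hS' : (CFC.sqrt S)ᴴ = CFC.sqrt S := (CFC.sqrt_nonneg S).isSelfAdjoint
  have hD' : (CFC.sqrt D)ᴴ = CFC.sqrt D := (CFC.sqrt_nonneg D).isSelfAdjoint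
  have hleft : (CFC.sqrt D * CFC.sqrt S)ᴴ * (CFC.sqrt D * CFC.sqrt S) = CFC.conjSqrt S D := by
    rw [conjTranspose_mul, hS', hD', CFC.conjSqrt_apply, Matrix.mul_assoc,
      ← Matrix.mul_assoc (CFC.sqrt D), CFC.sqrt_mul_sqrt_self D, Matrix.mul_assoc]
  have hright : CFC.sqrt D * CFC.sqrt S * (CFC.sqrt D * CFC.sqrt S)ᴴ = CFC.conjSqrt D S := by
    rw [conjTranspose_mul, hS', hD', CFC.conjSqrt_apply, Matrix.mul_assoc,
      ← Matrix.mul_assoc (CFC.sqrt S), CFC.sqrt_mul_sqrt_self S, Matrix.mul_assoc]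
  rwa [hleft, hright] at h

lemma two_mul_svalDesc_conjTranspose_mul_mul_le (hS : 0 ≤ S) (X Y : Matrix n n ℂ) (j : ℕ) :
    2 * svalDesc (Xᴴ * S * Y) j ≤ eigDesc (CFC.conjSqrt S (X * Xᴴ + Y * Yᴴ)) j := by
  have hS' : (CFC.sqrt S)ᴴ = CFC.sqrt S := (CFC.sqrt_nonneg S).isSelfAdjoint
  have h := two_mul_svalDesc_conjTranspose_mul_le (CFC.sqrt S * X) (CFC.sqrt S * Y) j
  have hprod : (CFC.sqrt S * X)ᴴ * (CFC.sqrt S * Y) = Xᴴ * S * Y := by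
    rw [conjTranspose_mul, hS', Matrix.mul_assoc, ← Matrix.mul_assoc (CFC.sqrt S),
      CFC.sqrt_mul_sqrt_self S, Matrix.mul_assoc]
  rw [hprod] at h
  simpa only [CFC.conjSqrt_apply, conjTranspose_mul, hS', Matrix.mul_add, Matrix.add_mul,
    Matrix.mul_assoc] using h

lemma eigDesc_conjSqrt_rpow_add_rpow_le {p q : ℝ} (hp : 0 ≤ p) (hq : 0 ≤ q) (hA : 0 ≤ A)
    (hB : 0 ≤ B) (hj : j < Fintype.card n) :
    eigDesc (CFC.conjSqrt (A ^ p + B ^ p) (A ^ q + B ^ q)) j ≤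
      2 * eigDesc (A ^ (p + q) + B ^ (p + q)) j := by
  have hnonneg (r : ℝ) : 0 ≤ A ^ r + B ^ r := add_nonneg CFC.rpow_nonneg CFC.rpow_nonneg
  wlog hqp : q ≤ p generalizing p q
  · rw [eigDesc_conjSqrt_comm (hnonneg p) (hnonneg q), add_comm p]
    exact this hq hp (le_of_not_ge hqp)
  have hconj : 0 ≤ CFC.conjSqrt (A ^ p + B ^ p) (A ^ q + B ^ q) := by
    simpa using CFC.conjSqrt_le_conjSqrt (c := A ^ p + B ^ p) (hnonneg q)
  calc eigDesc (CFC.conjSqrt (A ^ p + B ^ p) (A ^ q + B ^ q)) j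
    _ ≤ eigDesc ((2 : ℝ) • (A ^ (p + q) + B ^ (p + q))) j :=
      eigDesc_mono hconj.isSelfAdjoint (conjSqrt_rpow_add_rpow_le hq hqp hA hB) hj
    _ = 2 * eigDesc (A ^ (p + q) + B ^ (p + q)) j :=
      eigDesc_smul (hnonneg _).isSelfAdjoint two_pos j

lemma isHermitian_rpow_eq_rpow (hA : A.PosSemidef) (hA' : A.IsHermitian) (r : ℝ) :
    hA'.rpow r = A ^ r := by
  rw [CFC.rpow_eq_cfc_real hA.nonneg, hA'.cfc_eq, Matrix.IsHermitian.rpow]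

theorem zhan_singular_value_heinz_general (hA : A.PosSemidef) (hB : B.PosSemidef) {x y : ℝ}
    (hx : 0 ≤ x) (hy : 0 ≤ y) (hj : j < Fintype.card n) :
    svalDesc (A ^ x * B ^ y + A ^ y * B ^ x) j ≤ svalDesc (A ^ (x + y) + B ^ (x + y)) j := by
  wlog hxy : x ≤ y generalizing x y
  · rw [add_comm (A ^ x * B ^ y), add_comm x]
    exact this hy hx (le_of_not_ge hxy)
  have hyx : 0 ≤ y - x := sub_nonneg.mpr hxy
  have hnonneg (r : ℝ) : 0 ≤ A ^ r + B ^ r := add_nonneg CFC.rpow_nonneg CFC.rpow_nonneg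
  have hstar (C : Matrix n n ℂ) : (C ^ x)ᴴ = C ^ x := (CFC.rpow_nonneg (a := C)).isSelfAdjoint
  have hfactor : A ^ x * B ^ y + A ^ y * B ^ x =
      (A ^ x)ᴴ * (A ^ (y - x) + B ^ (y - x)) * B ^ x := by
    rw [hstar, Matrix.mul_add, Matrix.add_mul, Matrix.mul_assoc (A ^ x) (B ^ (y - x)),
      ← cfc_rpow_add_of_nonneg A hx hyx, ← cfc_rpow_add_of_nonneg B hyx hx, add_sub_cancel,
      sub_add_cancel, add_comm]
  have hsq (C : Matrix n n ℂ) : C ^ x * (C ^ x)ᴴ = C ^ (x + x) := by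
    rw [hstar, cfc_rpow_add_of_nonneg C hx hx]
  have htwo := calc
    2 * svalDesc (A ^ x * B ^ y + A ^ y * B ^ x) j
    _ ≤ eigDesc (CFC.conjSqrt (A ^ (y - x) + B ^ (y - x)) (A ^ (x + x) + B ^ (x + x))) j := by
      rw [hfactor, ← hsq, ← hsq]
      exact two_mul_svalDesc_conjTranspose_mul_mul_le (hnonneg _) _ _ j
    _ ≤ 2 * eigDesc (A ^ (y - x + (x + x)) + B ^ (y - x + (x + x))) j :=
      eigDesc_conjSqrt_rpow_add_rpow_le hyx (add_nonneg hx hx) hA.nonneg hB.nonneg hj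
    _ = 2 * eigDesc (A ^ (x + y) + B ^ (x + y)) j := by ring_nf
    _ ≤ 2 * svalDesc (A ^ (x + y) + B ^ (x + y)) j := by
      gcongr
      exact eigDesc_le_svalDesc (hnonneg _).isSelfAdjoint j
  linarith

end Heinz

/-- Zhan's conjecture: singular value inequality for Heinz means. -/
theorem zhan_singular_value_heinz {n : ℕ} {A B : Matrix (Fin n) (Fin n) ℂ}
    (hA : A.PosSemidef) (hB : B.PosSemidef) (s : ℝ) (hs0 : 0 ≤ s) (hs1 : s ≤ 1)
    (j : ℕ) (hj : j < n) :
    svalDesc (hA.1.rpow s * hB.1.rpow (1 - s) + hA.1.rpow (1 - s) * hB.1.rpow s) j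
      ≤ svalDesc (A + B) j := by
  open scoped MatrixOrder in
  simpa only [isHermitian_rpow_eq_rpow hA, isHermitian_rpow_eq_rpow hB, add_sub_cancel,
    CFC.rpow_one A hA.nonneg, CFC.rpow_one B hB.nonneg] using zhan_singular_value_heinz_general
      hA hB hs0 (sub_nonneg.mpr hs1) (hj.trans_eq (Fintype.card_fin n).symm)
end

section
/- If f: [0,∞) → ℝ is operator monotone, then for all PSD matrices A, B and every index j: λ_j(A f(A) + B f(B)) ≥ λ_j( ((A+B)/2) (f(A) + f(B)) ). -/
open scoped ComplexOrder Matrix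

/-!
Testing operator monotonicity on block matrices gives two convexity properties of `f`. Compress
`X = diag(A, B)` to the range of an isometry `V` with `Vᴴ X V = a • A + b • B`. The pinching bound
`X ≤ r • P X P + (r / (r - 1)) • (1 - P) X (1 - P)`, with `P = V Vᴴ`, has a right-hand side for
which `P` is invariant, so `Vᴴ f(X) V ≤ f(r • Vᴴ X V)`; letting `r → 1⁺` shows that `A ↦ f(A)` is
concave. Hansen's inequality, with `L = √X V`, compares `L Lᴴ ≤ X` and moves `f` across `L` by
`f(L Lᴴ) L = L f(Lᴴ L)`; it shows that `A ↦ A f(A)` is convex.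

For `C` the weighted mean of the `A i`, the matrix `C * ∑ w i • f(A i)` has the same eigenvalues as
`√C (∑ w i • f(A i)) √C`. Concavity bounds the latter by a multiple of `√C f(C) √C = C f(C)`,
convexity bounds that by `∑ w i • A i f(A i)`, and eigenvalues are monotone in the Loewner order.
-/

open scoped MatrixOrder InnerProductSpace Topology

section FunctionalCalculus

variable {𝕜 : Type*} [RCLike 𝕜] {m n : Type*} [Fintype m] [DecidableEq m] [Fintype n]
  [DecidableEq n]

lemma exists_polynomial_eqOn {K : Type*} [Field K] {s : Set K} (hs : s.Finite) (f : K → K) :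
    ∃ p : Polynomial K, s.EqOn f fun x => p.eval x := by
  classical
  refine ⟨Lagrange.interpolate hs.toFinset id f, fun x hx => ?_⟩
  exact (Lagrange.eval_interpolate_at_node f Function.injective_id.injOn
    (hs.mem_toFinset.2 hx)).symm

lemma aeval_mul_eq_mul_aeval {R S : Type*} [CommSemiring R] [Semiring S] [Algebra R S]
    {X : Matrix m m S} {Y : Matrix n n S} {K : Matrix m n S} (h : X * K = K * Y)
    (p : Polynomial R) : Polynomial.aeval X p * K = K * Polynomial.aeval Y p := by
  have pow_mul_eq (k : ℕ) : X ^ k * K = K * Y ^ k := by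
    induction k with
    | zero => simp
    | succ k ih =>
      rw [pow_succ, pow_succ, Matrix.mul_assoc, h, ← Matrix.mul_assoc, ih, Matrix.mul_assoc]
  simp only [Polynomial.aeval_eq_sum_range, Matrix.sum_mul, Matrix.mul_sum, Matrix.smul_mul,
    Matrix.mul_smul, pow_mul_eq]

lemma cfc_mul_eq_mul_cfc (f : ℝ → ℝ) {X : Matrix m m 𝕜} {Y : Matrix n n 𝕜}
    (hX : X.IsHermitian) (hY : Y.IsHermitian) {K : Matrix m n 𝕜} (h : X * K = K * Y) :
    cfc f X * K = K * cfc f Y := by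
  obtain ⟨p, hp⟩ := exists_polynomial_eqOn
    (X.finite_real_spectrum.union Y.finite_real_spectrum) f
  rw [(cfc_congr (hp.mono Set.subset_union_left)).trans (cfc_polynomial p X hX),
    (cfc_congr (hp.mono Set.subset_union_right)).trans (cfc_polynomial p Y hY)]
  exact aeval_mul_eq_mul_aeval h p

lemma cfc_submatrix_equiv (f : ℝ → ℝ) {X : Matrix m m 𝕜} (hX : X.IsHermitian) (e : n ≃ m) :
    cfc f (X.submatrix e e) = (cfc f X).submatrix e e := by
  have mul_perm (M : Matrix n n 𝕜) :
      M * (1 : Matrix m m 𝕜).submatrix e id = M.submatrix id e.symm :=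
    Matrix.mul_submatrix_one e id M
  have perm_mul (M : Matrix m m 𝕜) : (1 : Matrix m m 𝕜).submatrix e id * M = M.submatrix e id :=
    Matrix.one_submatrix_mul e (Equiv.refl m) M
  have hcfc := cfc_mul_eq_mul_cfc f (hX.submatrix e) hX (K := (1 : Matrix m m 𝕜).submatrix e id)
    (by rw [mul_perm, perm_mul, Matrix.submatrix_submatrix, Function.comp_id, e.self_comp_symm])
  rw [mul_perm, perm_mul] at hcfc
  simpa only [Matrix.submatrix_submatrix, Function.comp_id, Function.id_comp, e.symm_comp_self,
    Matrix.submatrix_id_id] using congrArg (·.submatrix id e) hcfc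

lemma cfc_fromBlocks_diagonal (f : ℝ → ℝ) {A : Matrix m m 𝕜} {B : Matrix n n 𝕜}
    (hA : A.IsHermitian) (hB : B.IsHermitian) :
    cfc f (Matrix.fromBlocks A 0 0 B) = Matrix.fromBlocks (cfc f A) 0 0 (cfc f B) := by
  have hD : (Matrix.fromBlocks A 0 0 B).IsHermitian := hA.fromBlocks (by simp) hB
  have hleft := cfc_mul_eq_mul_cfc f hD hA (K := Matrix.fromRows 1 0)
    (by simp [Matrix.fromBlocks_mul_fromRows, Matrix.fromRows_mul])
  have hright := cfc_mul_eq_mul_cfc f hD hB (K := Matrix.fromRows 0 1)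
    (by simp [Matrix.fromBlocks_mul_fromRows, Matrix.fromRows_mul])
  rw [← Matrix.fromBlocks_toBlocks (cfc f (Matrix.fromBlocks A 0 0 B))] at hleft hright ⊢
  simp only [Matrix.fromBlocks_mul_fromRows, Matrix.fromRows_mul, Matrix.mul_one, Matrix.mul_zero,
    Matrix.one_mul, Matrix.zero_mul, add_zero, zero_add, Matrix.fromRows_ext_iff] at hleft hright
  rw [hleft.1, hleft.2, hright.1, hright.2]

lemma sqrt_mul_cfc_mul_sqrt (f : ℝ → ℝ) {X : Matrix n n 𝕜} (hX : 0 ≤ X) :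
    CFC.sqrt X * cfc f X * CFC.sqrt X = X * cfc f X := by
  have hcomm : Commute X (CFC.sqrt X) := by
    nth_rw 1 [← CFC.sqrt_mul_sqrt_self X hX]
    exact (Commute.refl _).mul_left (Commute.refl _)
  rw [mul_assoc, (hcomm.cfc_real f).eq, ← mul_assoc, CFC.sqrt_mul_sqrt_self X hX]

end FunctionalCalculus

section LoewnerOrder

variable {𝕜 : Type*} [RCLike 𝕜] {m n : Type*}

lemma conjTranspose_mul_mul_le [Fintype m] [Finite n] {X Y : Matrix m m 𝕜} (h : X ≤ Y)
    (K : Matrix m n 𝕜) : Kᴴ * X * K ≤ Kᴴ * Y * K := by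
  rw [Matrix.le_iff, ← Matrix.sub_mul, ← Matrix.mul_sub]
  exact (Matrix.le_iff.1 h).conjTranspose_mul_mul_same K

lemma fromBlocks_diagonal_nonneg [Finite m] [Finite n] {A : Matrix m m 𝕜} {B : Matrix n n 𝕜}
    (hA : 0 ≤ A) (hB : 0 ≤ B) : 0 ≤ Matrix.fromBlocks A 0 0 B := by
  classical
  cases nonempty_fintype m
  cases nonempty_fintype n
  obtain ⟨S, rfl⟩ := CStarAlgebra.nonneg_iff_eq_star_mul_self.1 hA
  obtain ⟨T, rfl⟩ := CStarAlgebra.nonneg_iff_eq_star_mul_self.1 hB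
  have h := (Matrix.posSemidef_conjTranspose_mul_self (Matrix.fromBlocks S 0 0 T)).nonneg
  simpa [Matrix.fromBlocks_conjTranspose, Matrix.fromBlocks_multiply, Matrix.star_eq_conjTranspose]
    using h

lemma mul_conjTranspose_le_one_of_isometry [Fintype m] [DecidableEq m] [Fintype n]
    [DecidableEq n] {V : Matrix m n 𝕜} (hV : Vᴴ * V = 1) : V * Vᴴ ≤ 1 := by
  refine IsStarProjection.le_one ⟨?_, Matrix.isHermitian_mul_conjTranspose_self V⟩
  rw [IsIdempotentElem, Matrix.mul_assoc, ← Matrix.mul_assoc Vᴴ, hV, Matrix.one_mul]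

lemma isClosed_setOf_posSemidef : IsClosed {M : Matrix n n 𝕜 | M.PosSemidef} := by
  simp only [Matrix.PosSemidef, Set.ofPred_and, Set.ofPred_forall]
  refine (isClosed_eq (by fun_prop) continuous_id).inter <| isClosed_iInter fun x =>
    isClosed_le continuous_const ?_
  simp only [Finsupp.sum]
  fun_prop

lemma matrix_orderClosedTopology : OrderClosedTopology (Matrix n n 𝕜) where
  isClosed_le' := isClosed_le_of_isClosed_nonneg <| by
    simpa only [Matrix.nonneg_iff_posSemidef] using isClosed_setOf_posSemidef

lemma le_smul_conj_add_smul_conj {A : Type*} [Ring A] [StarRing A] [PartialOrder A]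
    [StarOrderedRing A] [Algebra ℝ A] [StarModule ℝ A] {x p : A} (hx : 0 ≤ x)
    (hp : IsSelfAdjoint p) {r : ℝ} (hr : 1 < r) :
    x ≤ r • (p * x * p) + (r / (r - 1)) • ((1 - p) * x * (1 - p)) := by
  have hr' : 0 < r - 1 := sub_pos.2 hr
  have hr0 := hr'.ne'
  have hy : IsSelfAdjoint ((r - 1) • p - (1 - p)) :=
    ((IsSelfAdjoint.all (r - 1)).smul hp).sub ((IsSelfAdjoint.one A).sub hp)
  have hnonneg := smul_nonneg (inv_nonneg.2 hr'.le) (hy.conjugate_nonneg hx)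
  rw [← sub_nonneg]
  -- the difference of the two sides is `(r - 1)⁻¹ • y x y` with `y = (r - 1) • p - (1 - p)`
  convert hnonneg using 1
  simp only [mul_sub, sub_mul, mul_one, one_mul, smul_mul_assoc, mul_smul_comm]
  match_scalars <;> field_simp <;> ring

end LoewnerOrder

section Dilation

variable {𝕜 : Type*} [RCLike 𝕜] {n : Type*} [Fintype n] [DecidableEq n] {a b : ℝ}

/-- The `2n × n` matrix with blocks `√a` and `√b`: conjugating the block diagonal matrix
`diag(A, B)` by it yields `a • A + b • B`. -/
noncomputable def segmentDilation (𝕜 n : Type*) [RCLike 𝕜] [DecidableEq n] (a b : ℝ) :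
    Matrix (n ⊕ n) n 𝕜 :=
  Matrix.fromRows (√a • 1) (√b • 1)

lemma segmentDilation_conj (ha : 0 ≤ a) (hb : 0 ≤ b) (A B : Matrix n n 𝕜) :
    (segmentDilation 𝕜 n a b)ᴴ * Matrix.fromBlocks A 0 0 B * segmentDilation 𝕜 n a b =
      a • A + b • B := by
  rw [segmentDilation, Matrix.mul_assoc, Matrix.fromBlocks_mul_fromRows,
    Matrix.conjTranspose_fromRows_eq_fromCols_conjTranspose, Matrix.fromCols_mul_fromRows]
  simp [smul_smul, Real.mul_self_sqrt, ha, hb]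

lemma segmentDilation_isometry (ha : 0 ≤ a) (hb : 0 ≤ b) (hab : a + b = 1) :
    (segmentDilation 𝕜 n a b)ᴴ * segmentDilation 𝕜 n a b = 1 := by
  simpa [← add_smul, hab] using segmentDilation_conj ha hb (1 : Matrix n n 𝕜) 1

end Dilation

/-- Operator monotonicity of `f` on `[0, ∞)`: the functional calculus of `f` preserves the Loewner
order on positive semidefinite matrices over `𝕜` of every size. Only the index types `Fin k` are
quantified over, which avoids a universe parameter. -/
def OperatorMonotone (𝕜 : Type*) [RCLike 𝕜] (f : ℝ → ℝ) : Prop :=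
  ∀ k : ℕ, MonotoneOn (cfc f : Matrix (Fin k) (Fin k) 𝕜 → Matrix (Fin k) (Fin k) 𝕜) (Set.Ici 0)

namespace OperatorMonotone

variable {𝕜 : Type*} [RCLike 𝕜] {m n : Type*} [Fintype m] [DecidableEq m] [Fintype n]
  [DecidableEq n] {f : ℝ → ℝ}

lemma of_posSemidef
    (h : ∀ (k : ℕ) (X Y : Matrix (Fin k) (Fin k) 𝕜) (hX : X.PosSemidef) (hY : Y.PosSemidef),
      (X - Y).PosSemidef → (hX.1.cfc f - hY.1.cfc f).PosSemidef) : OperatorMonotone 𝕜 f := by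
  intro k Y hY X hX hYX
  have hX' := Matrix.nonneg_iff_posSemidef.1 hX
  have hY' := Matrix.nonneg_iff_posSemidef.1 hY
  rw [hX'.1.cfc_eq, hY'.1.cfc_eq]
  exact h k X Y hX' hY' hYX

lemma monotoneOn (hf : OperatorMonotone 𝕜 f) :
    MonotoneOn (cfc f : Matrix n n 𝕜 → Matrix n n 𝕜) (Set.Ici 0) := by
  intro X (hX : 0 ≤ X) Y (hY : 0 ≤ Y) hXY
  let e := (Fintype.equivFin n).symm
  have hX' : 0 ≤ X.submatrix e e := ((Matrix.nonneg_iff_posSemidef.1 hX).submatrix e).nonneg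
  have hXY' : X.submatrix e e ≤ Y.submatrix e e := (Matrix.le_iff.1 hXY).submatrix e
  have h := hf _ hX' (hX'.trans hXY') hXY'
  rw [cfc_submatrix_equiv f hX.isSelfAdjoint, cfc_submatrix_equiv f hY.isSelfAdjoint] at h
  exact (Matrix.posSemidef_submatrix_equiv e).1 (Matrix.le_iff.1 h)

lemma conj_cfc_le_cfc_smul_conj (hf : OperatorMonotone 𝕜 f) {X : Matrix m m 𝕜} (hX : 0 ≤ X)
    {V : Matrix m n 𝕜} (hV : Vᴴ * V = 1) {r : ℝ} (hr : 1 < r) :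
    Vᴴ * cfc f X * V ≤ cfc f (r • (Vᴴ * X * V)) := by
  set P := V * Vᴴ with hP
  set Y := r • (P * X * P) + (r / (r - 1)) • ((1 - P) * X * (1 - P)) with hY
  have hPV : P * V = V := by rw [hP, Matrix.mul_assoc, hV, Matrix.mul_one]
  have hXY : X ≤ Y :=
    le_smul_conj_add_smul_conj hX (Matrix.isHermitian_mul_conjTranspose_self V) hr
  have hYV : Y * V = V * (r • (Vᴴ * X * V)) := by
    simp only [hY, Matrix.add_mul, Matrix.smul_mul, Matrix.mul_assoc _ _ V, Matrix.sub_mul, hPV,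
      Matrix.one_mul, sub_self, Matrix.mul_zero, smul_zero, add_zero, Matrix.mul_smul]
    rw [hP, Matrix.mul_assoc]
  have hVXV : (r • (Vᴴ * X * V)).IsHermitian :=
    (IsSelfAdjoint.all r).smul (Matrix.isHermitian_conjTranspose_mul_mul V hX.isSelfAdjoint)
  have hY0 : 0 ≤ Y := hX.trans hXY
  calc Vᴴ * cfc f X * V ≤ Vᴴ * cfc f Y * V :=
        conjTranspose_mul_mul_le (hf.monotoneOn hX hY0 hXY) V
    _ = cfc f (r • (Vᴴ * X * V)) := by
      rw [Matrix.mul_assoc, cfc_mul_eq_mul_cfc f hY0.isSelfAdjoint hVXV hYV, ← Matrix.mul_assoc,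
        hV, Matrix.one_mul]

lemma smul_cfc_add_smul_cfc_le (hf : OperatorMonotone 𝕜 f) {A B : Matrix n n 𝕜} (hA : 0 ≤ A)
    (hB : 0 ≤ B) {a b : ℝ} (ha : 0 ≤ a) (hb : 0 ≤ b) (hab : a + b = 1) {r : ℝ} (hr : 1 < r) :
    a • cfc f A + b • cfc f B ≤ cfc f (r • (a • A + b • B)) := by
  have h := hf.conj_cfc_le_cfc_smul_conj (fromBlocks_diagonal_nonneg hA hB)
    (segmentDilation_isometry ha hb hab) hr
  rwa [cfc_fromBlocks_diagonal f hA.isSelfAdjoint hB.isSelfAdjoint, segmentDilation_conj ha hb,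
    segmentDilation_conj ha hb] at h

lemma cfc_smul_le (hf : OperatorMonotone 𝕜 f) {C : Matrix n n 𝕜} (hC : 0 ≤ C) {r : ℝ}
    (hr : 1 < r) : cfc f (r • C) ≤ r ^ 2 • cfc f C - (r ^ 2 - 1) • cfc f (0 : Matrix n n 𝕜) := by
  -- this bound lets `concaveOn_cfc` pass to the limit `r → 1⁺` without any continuity of `f`
  have hr0 : 0 < r := one_pos.trans hr
  have hr2 : (r ^ 2)⁻¹ ≤ 1 := inv_le_one_of_one_le₀ (one_le_pow₀ hr.le)
  have h := hf.smul_cfc_add_smul_cfc_le (smul_nonneg hr0.le hC) le_rfl (inv_nonneg.2 (sq_nonneg r))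
    (sub_nonneg.2 hr2) (add_sub_cancel _ 1) hr
  have hC' : r • ((r ^ 2)⁻¹ • r • C + (1 - (r ^ 2)⁻¹) • 0) = C := by
    match_scalars
    field_simp
  rw [hC'] at h
  rw [le_sub_iff_add_le]
  convert smul_le_smul_of_nonneg_left h (sq_nonneg r) using 1
  match_scalars <;> field_simp

lemma concaveOn_cfc (hf : OperatorMonotone 𝕜 f) :
    ConcaveOn ℝ (Set.Ici 0) (cfc f : Matrix n n 𝕜 → Matrix n n 𝕜) := by
  refine ⟨convex_Ici 0, fun A (hA : 0 ≤ A) B (hB : 0 ≤ B) a b ha hb hab => ?_⟩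
  set C := a • A + b • B
  have hC : 0 ≤ C := add_nonneg (smul_nonneg ha hA) (smul_nonneg hb hB)
  have := matrix_orderClosedTopology (𝕜 := 𝕜) (n := n)
  have hlim : Filter.Tendsto
      (fun r : ℝ => r ^ 2 • cfc f C - (r ^ 2 - 1) • cfc f (0 : Matrix n n 𝕜)) (𝓝[>] 1)
      (𝓝 (cfc f C)) :=
    (Continuous.tendsto' (by fun_prop) 1 _ (by simp)).mono_left nhdsWithin_le_nhds
  refine ge_of_tendsto hlim (eventually_mem_nhdsWithin.mono fun r hr => ?_)
  exact (hf.smul_cfc_add_smul_cfc_le hA hB ha hb hab hr).trans (hf.cfc_smul_le hC hr)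

lemma conj_mul_cfc_conj_le (hf : OperatorMonotone 𝕜 f) {X : Matrix m m 𝕜} (hX : 0 ≤ X)
    {V : Matrix m n 𝕜} (hV : V * Vᴴ ≤ 1) :
    Vᴴ * X * V * cfc f (Vᴴ * X * V) ≤ Vᴴ * (X * cfc f X) * V := by
  set S := CFC.sqrt X
  have hS : Sᴴ = S := (CFC.sqrt_nonneg X).isSelfAdjoint.star_eq
  have hSS : S * S = X := CFC.sqrt_mul_sqrt_self X hX
  set L := S * V with hL
  have hLL : Lᴴ * L = Vᴴ * X * V := by
    simp only [hL, Matrix.conjTranspose_mul, hS, ← hSS, Matrix.mul_assoc]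
  have hle : L * Lᴴ ≤ X := by
    have h := conjTranspose_mul_mul_le hV S
    simpa only [hL, Matrix.conjTranspose_mul, hS, Matrix.mul_one, hSS, Matrix.mul_assoc] using h
  have hcfc : cfc f (L * Lᴴ) * L = L * cfc f (Lᴴ * L) :=
    cfc_mul_eq_mul_cfc f (Matrix.isHermitian_mul_conjTranspose_self L)
      (Matrix.isHermitian_conjTranspose_mul_self L) (Matrix.mul_assoc L Lᴴ L)
  calc Vᴴ * X * V * cfc f (Vᴴ * X * V) = Lᴴ * cfc f (L * Lᴴ) * L := by
        rw [← hLL, Matrix.mul_assoc, ← hcfc, ← Matrix.mul_assoc]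
    _ ≤ Lᴴ * cfc f X * L := conjTranspose_mul_mul_le
        (hf.monotoneOn (Matrix.posSemidef_self_mul_conjTranspose L).nonneg hX hle) L
    _ = Vᴴ * (X * cfc f X) * V := by
        rw [← sqrt_mul_cfc_mul_sqrt f hX]
        simp only [hL, Matrix.conjTranspose_mul, hS, Matrix.mul_assoc, S]

lemma convexOn_mul_cfc (hf : OperatorMonotone 𝕜 f) :
    ConvexOn ℝ (Set.Ici 0) fun A : Matrix n n 𝕜 => A * cfc f A := by
  refine ⟨convex_Ici 0, fun A (hA : 0 ≤ A) B (hB : 0 ≤ B) a b ha hb hab => ?_⟩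
  have h := hf.conj_mul_cfc_conj_le (fromBlocks_diagonal_nonneg hA hB)
    (mul_conjTranspose_le_one_of_isometry (segmentDilation_isometry ha hb hab))
  simpa only [cfc_fromBlocks_diagonal f hA.isSelfAdjoint hB.isSelfAdjoint,
    Matrix.fromBlocks_multiply, Matrix.zero_mul, Matrix.mul_zero, add_zero, zero_add,
    segmentDilation_conj ha hb] using h

lemma sqrt_centerMass_conj_le (hf : OperatorMonotone 𝕜 f) {ι : Type*} {t : Finset ι}
    {w : ι → ℝ} (hw : ∀ i ∈ t, 0 ≤ w i) (hw_pos : 0 < ∑ i ∈ t, w i) {A : ι → Matrix n n 𝕜}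
    (hA : ∀ i ∈ t, 0 ≤ A i) :
    CFC.sqrt (t.centerMass w A) * (∑ i ∈ t, w i • cfc f (A i)) * CFC.sqrt (t.centerMass w A) ≤
      ∑ i ∈ t, w i • (A i * cfc f (A i)) := by
  set C := t.centerMass w A
  set W := ∑ i ∈ t, w i
  have sum_eq (B : ι → Matrix n n 𝕜) : ∑ i ∈ t, w i • B i = W • t.centerMass w B :=
    (smul_inv_smul₀ hw_pos.ne' _).symm
  have hC : C ∈ Set.Ici 0 := (convex_Ici 0).centerMass_mem hw hw_pos hA
  have hS : (CFC.sqrt C)ᴴ = CFC.sqrt C := (CFC.sqrt_nonneg C).isSelfAdjoint.star_eq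
  have hconcave : CFC.sqrt C * t.centerMass w (cfc f ∘ A) * CFC.sqrt C ≤
      CFC.sqrt C * cfc f C * CFC.sqrt C := by
    simpa only [hS] using
      conjTranspose_mul_mul_le (hf.concaveOn_cfc.le_map_centerMass hw hw_pos hA) (CFC.sqrt C)
  have hconvex : C * cfc f C ≤ t.centerMass w fun i => A i * cfc f (A i) :=
    hf.convexOn_mul_cfc.map_centerMass_le hw hw_pos hA
  calc CFC.sqrt C * (∑ i ∈ t, w i • cfc f (A i)) * CFC.sqrt C
      = W • (CFC.sqrt C * t.centerMass w (cfc f ∘ A) * CFC.sqrt C) := by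
        rw [sum_eq fun i => cfc f (A i), mul_smul_comm, smul_mul_assoc]
        rfl
    _ ≤ W • (C * cfc f C) := by
        rw [← sqrt_mul_cfc_mul_sqrt f hC]
        exact smul_le_smul_of_nonneg_left hconcave hw_pos.le
    _ ≤ W • t.centerMass w fun i => A i * cfc f (A i) :=
        smul_le_smul_of_nonneg_left hconvex hw_pos.le
    _ = ∑ i ∈ t, w i • (A i * cfc f (A i)) := (sum_eq _).symm

end OperatorMonotone

section WeylMonotonicity

variable {𝕜 : Type*} [RCLike 𝕜] {E : Type*} [NormedAddCommGroup E] [InnerProductSpace 𝕜 E]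
  [FiniteDimensional 𝕜 E] {T S : E →ₗ[𝕜] E} {d : ℕ}

lemma exists_ne_zero_forall_inner_eq_zero {ι : Type*} [Fintype ι] (u : ι → E)
    (hι : Fintype.card ι < Module.finrank 𝕜 E) : ∃ x : E, x ≠ 0 ∧ ∀ i, ⟪u i, x⟫_𝕜 = 0 := by
  have hspan : (Submodule.span 𝕜 (Set.range u))ᗮ ≠ ⊥ := fun h => by
    rw [Submodule.orthogonal_eq_bot_iff] at h
    have hcard := finrank_range_le_card (R := 𝕜) u
    rw [Set.finrank, h, finrank_top] at hcard
    exact hι.not_ge hcard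
  obtain ⟨x, hx, hx0⟩ := Submodule.exists_mem_ne_zero_of_ne_bot hspan
  exact ⟨x, hx0, fun i => Submodule.inner_right_of_mem_orthogonal
    (Submodule.subset_span (Set.mem_range_self i)) hx⟩

lemma re_inner_apply_eq_sum_eigenvalues (hT : T.IsSymmetric) (hd : Module.finrank 𝕜 E = d)
    (x : E) : RCLike.re ⟪T x, x⟫_𝕜 =
      ∑ i, hT.eigenvalues hd i * ‖⟪hT.eigenvectorBasis hd i, x⟫_𝕜‖ ^ 2 := by
  rw [← (hT.eigenvectorBasis hd).sum_inner_mul_inner, map_sum]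
  refine Finset.sum_congr rfl fun i _ => ?_
  rw [hT, hT.apply_eigenvectorBasis, inner_smul_right, mul_assoc, RCLike.re_ofReal_mul,
    inner_mul_symm_re_eq_norm, norm_mul, norm_inner_symm x, sq]

lemma eigenvalue_mul_norm_sq_le_re_inner (hT : T.IsSymmetric) (hd : Module.finrank 𝕜 E = d)
    {j : Fin d} {x : E} (hx : ∀ k, j < k → ⟪hT.eigenvectorBasis hd k, x⟫_𝕜 = 0) :
    hT.eigenvalues hd j * ‖x‖ ^ 2 ≤ RCLike.re ⟪T x, x⟫_𝕜 := by
  rw [re_inner_apply_eq_sum_eigenvalues hT hd,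
    ← (hT.eigenvectorBasis hd).sum_sq_norm_inner_right x, Finset.mul_sum]
  refine Finset.sum_le_sum fun k _ => ?_
  rcases le_or_gt k j with hkj | hjk
  · exact mul_le_mul_of_nonneg_right (hT.eigenvalues_antitone hd hkj) (sq_nonneg _)
  · simp [hx k hjk]

lemma re_inner_le_eigenvalue_mul_norm_sq (hT : T.IsSymmetric) (hd : Module.finrank 𝕜 E = d)
    {j : Fin d} {x : E} (hx : ∀ k, k < j → ⟪hT.eigenvectorBasis hd k, x⟫_𝕜 = 0) :
    RCLike.re ⟪T x, x⟫_𝕜 ≤ hT.eigenvalues hd j * ‖x‖ ^ 2 := by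
  rw [re_inner_apply_eq_sum_eigenvalues hT hd,
    ← (hT.eigenvectorBasis hd).sum_sq_norm_inner_right x, Finset.mul_sum]
  refine Finset.sum_le_sum fun k _ => ?_
  rcases le_or_gt j k with hjk | hkj
  · exact mul_le_mul_of_nonneg_right (hT.eigenvalues_antitone hd hjk) (sq_nonneg _)
  · simp [hx k hkj]

lemma eigenvalues_le_eigenvalues (hT : T.IsSymmetric) (hS : S.IsSymmetric)
    (hd : Module.finrank 𝕜 E = d) (hTS : T ≤ S) (j : Fin d) :
    hT.eigenvalues hd j ≤ hS.eigenvalues hd j := by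
  -- `d - 1` conditions put `x` in the span of the first `T`- and of the last `S`-eigenvectors
  obtain ⟨x, hx0, hx⟩ := exists_ne_zero_forall_inner_eq_zero (𝕜 := 𝕜)
    (fun k : {k // k ≠ j} =>
      if k.1 < j then hS.eigenvectorBasis hd k.1 else hT.eigenvectorBasis hd k.1)
    (by simpa [hd] using j.pos)
  have hS_low (k : Fin d) (hk : k < j) : ⟪hS.eigenvectorBasis hd k, x⟫_𝕜 = 0 := by
    simpa [hk] using hx ⟨k, hk.ne⟩
  have hT_high (k : Fin d) (hk : j < k) : ⟪hT.eigenvectorBasis hd k, x⟫_𝕜 = 0 := by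
    simpa [hk.not_gt] using hx ⟨k, hk.ne'⟩
  have hmono : RCLike.re ⟪T x, x⟫_𝕜 ≤ RCLike.re ⟪S x, x⟫_𝕜 := by
    simpa [inner_sub_left] using ((LinearMap.le_def T S).1 hTS).re_inner_nonneg_left x
  refine le_of_mul_le_mul_right ?_ (pow_pos (norm_pos_iff.2 hx0) 2)
  calc hT.eigenvalues hd j * ‖x‖ ^ 2 ≤ RCLike.re ⟪T x, x⟫_𝕜 :=
        eigenvalue_mul_norm_sq_le_re_inner hT hd hT_high
    _ ≤ RCLike.re ⟪S x, x⟫_𝕜 := hmono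
    _ ≤ hS.eigenvalues hd j * ‖x‖ ^ 2 := re_inner_le_eigenvalue_mul_norm_sq hS hd hS_low

variable {n : Type*} [Fintype n] [DecidableEq n]

lemma eigDesc_eq_eigenvalues₀_s17 {M : Matrix n n ℂ} (hM : M.IsHermitian)
    (j : Fin (Fintype.card n)) : eigDesc M j = hM.eigenvalues₀ j := by
  have hsort : (M.charpoly.roots.map Complex.re).sort (· ≥ ·) = List.ofFn hM.eigenvalues₀ :=
    hM.sort_roots_charpoly_eq_eigenvalues₀
  simp [eigDesc, hsort]

lemma eigDesc_le_eigDesc {M N : Matrix n n ℂ} (hM : M.IsHermitian) (hMN : M ≤ N) {j : ℕ}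
    (hj : j < Fintype.card n) : eigDesc M j ≤ eigDesc N j := by
  have hN : N.IsHermitian := by simpa using (Matrix.le_iff.1 hMN).1.add hM
  rw [eigDesc_eq_eigenvalues₀_s17 hM ⟨j, hj⟩, eigDesc_eq_eigenvalues₀_s17 hN ⟨j, hj⟩]
  refine eigenvalues_le_eigenvalues _ _ _ ?_ _
  rw [LinearMap.le_def, ← map_sub, Matrix.isPositive_toEuclideanLin_iff]
  exact Matrix.le_iff.1 hMN

end WeylMonotonicity

lemma eigDesc_mul_eq_eigDesc_sqrt_conj {n : Type*} [Fintype n] [DecidableEq n]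
    {C : Matrix n n ℂ} (hC : 0 ≤ C) (M : Matrix n n ℂ) (j : ℕ) :
    eigDesc (C * M) j = eigDesc (CFC.sqrt C * M * CFC.sqrt C) j := by
  rw [eigDesc, eigDesc, Matrix.charpoly_mul_comm (CFC.sqrt C * M), ← mul_assoc,
    CFC.sqrt_mul_sqrt_self C hC]

theorem monotone_eig_ineq_general {ι n : Type*} [Fintype n] [DecidableEq n] {f : ℝ → ℝ}
    (hf : OperatorMonotone ℂ f) {t : Finset ι} {w : ι → ℝ} (hw : ∀ i ∈ t, 0 ≤ w i)
    (hw_pos : 0 < ∑ i ∈ t, w i) {A : ι → Matrix n n ℂ} (hA : ∀ i ∈ t, 0 ≤ A i) {j : ℕ}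
    (hj : j < Fintype.card n) :
    eigDesc (t.centerMass w A * ∑ i ∈ t, w i • cfc f (A i)) j ≤
      eigDesc (∑ i ∈ t, w i • (A i * cfc f (A i))) j := by
  have hC : t.centerMass w A ∈ Set.Ici 0 := (convex_Ici 0).centerMass_mem hw hw_pos hA
  have hsum : IsSelfAdjoint (∑ i ∈ t, w i • cfc f (A i)) :=
    isSelfAdjoint_sum t fun i _ => (IsSelfAdjoint.all (w i)).smul (cfc_predicate f (A i))
  rw [eigDesc_mul_eq_eigDesc_sqrt_conj hC]
  exact eigDesc_le_eigDesc (hsum.conjugate_self (CFC.sqrt_nonneg _).isSelfAdjoint)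
    (hf.sqrt_centerMass_conj_le hw hw_pos hA) hj

lemma inv_two_smul_add_eq_centerMass {K E : Type*} [DivisionRing K] [AddCommGroup E] [Module K E]
    [Module ℝ E] (x y : E) :
    (2 : K)⁻¹ • (x + y) = Finset.univ.centerMass (fun _ : Fin 2 => (1 : ℝ)) ![x, y] := by
  simpa [Finset.centerMass, Fin.sum_univ_two, one_add_one_eq_two] using
    inv_natCast_smul_eq K ℝ 2 (x + y)

/-- Corollary 1 of the paper. -/
theorem monotone_eig_ineq {n : ℕ} (f : ℝ → ℝ)
    (hf : ∀ (k : ℕ) (X Y : Matrix (Fin k) (Fin k) ℂ) (hX : X.PosSemidef)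
      (hY : Y.PosSemidef), (X - Y).PosSemidef → (hX.1.cfc f - hY.1.cfc f).PosSemidef)
    {A B : Matrix (Fin n) (Fin n) ℂ} (hA : A.PosSemidef) (hB : B.PosSemidef)
    (j : ℕ) (hj : j < n) :
    eigDesc (((2 : ℂ)⁻¹ • (A + B)) * (hA.1.cfc f + hB.1.cfc f)) j
      ≤ eigDesc (A * hA.1.cfc f + B * hB.1.cfc f) j := by
  rw [← hA.1.cfc_eq, ← hB.1.cfc_eq, inv_two_smul_add_eq_centerMass]
  simpa [Fin.sum_univ_two] using monotone_eig_ineq_general (.of_posSemidef hf)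
    (t := Finset.univ) (w := fun _ : Fin 2 => 1) (A := ![A, B]) (by simp) (by simp)
    (by simp [Fin.forall_fin_two, hA.nonneg, hB.nonneg]) (j := j) (by simpa using hj)
end
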